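/- Under Condition (★), for every integer h ≥ 2 and every ε > 0, the quantity #{m ∈ S_h(x) : ω(m) < (1−ε)·log log N(m) or ω(m) > (1+ε)·log log N(m)} divided by #S_h(x) tends to 0 as x → ∞; i.e., ω has normal order log log N(m) over the h-free elements. -/

import Mathlib

open Filter Topology Asymptotics
open scoped Classical

noncomputable section

/-- The norm on the free abelian monoid `P →₀ ℕ`, extended multiplicatively
from the norm `N` on the prime elements. -/
def Nm {P : Type*} (N : P → ℕ) (m : P →₀ ℕ) : ℕ :=
  m.prod fun p k => N p ^ k

/-- The number of distinct prime elements generating `m`. -/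
def omegaM {P : Type*} (m : P →₀ ℕ) : ℕ := m.support.card

/-- `m` is `h`-free: every multiplicity is at most `h - 1`. -/
def HFree {P : Type*} (h : ℕ) (m : P →₀ ℕ) : Prop := ∀ p, m p ≤ h - 1

/-- `m` is `h`-full: every nonzero multiplicity is at least `h`. -/
def HFull {P : Type*} (h : ℕ) (m : P →₀ ℕ) : Prop := ∀ p, m p = 0 ∨ h ≤ m p

/-- Condition (★): `#{m : N(m) ≤ x} = κ·x + O(x^θ)` with `κ > 0`, `0 ≤ θ < 1`. -/
def StarCond {P : Type*} (N : P → ℕ) (κ θ : ℝ) : Prop :=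
  0 < κ ∧ 0 ≤ θ ∧ θ < 1 ∧
    (fun x : ℝ => (({m : P →₀ ℕ | (Nm N m : ℝ) ≤ x}.ncard : ℝ) - κ * x))
      =O[atTop] fun x : ℝ => x ^ θ

/-- The generalized zeta function `ζ_M(s) = ∑_m N(m)^{-s}`. -/
def zetaM {P : Type*} (N : P → ℕ) (s : ℝ) : ℝ :=
  ∑' m : P →₀ ℕ, 1 / (Nm N m : ℝ) ^ s

/-- The constant `γ_h`. -/
def gammah {P : Type*} (N : P → ℕ) (h : ℕ) : ℝ :=
  ∏' p : P, (1 + ((N p : ℝ) - (N p : ℝ) ^ (1 / (h : ℝ))) /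
    ((N p : ℝ) ^ 2 * ((N p : ℝ) ^ (1 / (h : ℝ)) - 1)))

/-- `A` is the Mertens constant `𝔄` of the prime system:
`𝔄 = lim (∑_{N(p) ≤ x} 1/N(p) − log log x)`. -/
def IsMertens {P : Type*} (N : P → ℕ) (A : ℝ) : Prop :=
  Tendsto (fun x : ℝ =>
      (∑ᶠ p ∈ {p : P | (N p : ℝ) ≤ x}, 1 / (N p : ℝ)) - Real.log (Real.log x))
    atTop (𝓝 A)

/-- The constant `𝔅 = -π²/6`. -/
def Bconst : ℝ := -(Real.pi ^ 2) / 6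

/-- The constant `ℭ₁`, given the Mertens constant `A`. -/
def C1const {P : Type*} (N : P → ℕ) (h : ℕ) (A : ℝ) : ℝ :=
  A - ∑' p : P, ((N p : ℝ) - 1) / ((N p : ℝ) * ((N p : ℝ) ^ h - 1))

/-- The constant `ℭ₂`, given the Mertens constant `A`. -/
def C2const {P : Type*} (N : P → ℕ) (h : ℕ) (A : ℝ) : ℝ :=
  C1const N h A ^ 2 + C1const N h A + Bconst -
    ∑' p : P, (((N p : ℝ) ^ (h - 1) - 1) / ((N p : ℝ) ^ h - 1)) ^ 2

/-- The convergent series `𝔏_h(r)`. -/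
def LhSum {P : Type*} (N : P → ℕ) (h : ℕ) (r : ℝ) : ℝ :=
  ∑' p : P, 1 / ((N p : ℝ) ^ (r / (h : ℝ) - 1) *
    ((N p : ℝ) - (N p : ℝ) ^ (1 - 1 / (h : ℝ)) + 1))

/-- The constant `𝔇₁`, given the Mertens constant `A`. -/
def D1const {P : Type*} (N : P → ℕ) (h : ℕ) (A : ℝ) : ℝ :=
  A - Real.log (h : ℝ) + LhSum N h ((h : ℝ) + 1) - LhSum N h (2 * (h : ℝ))

/-- The constant `𝔇₂`, given the Mertens constant `A`. -/
def D2const {P : Type*} (N : P → ℕ) (h : ℕ) (A : ℝ) : ℝ :=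
  D1const N h A ^ 2 + D1const N h A + Bconst -
    ∑' p : P, (1 / ((N p : ℝ) - (N p : ℝ) ^ (1 - 1 / (h : ℝ)) + 1)) ^ 2

/-- The error term `R_{S_h}(x)` for `h`-free counts. -/
def RSfree (h : ℕ) (θ : ℝ) (x : ℝ) : ℝ :=
  if 1 / (h : ℝ) < θ then x ^ θ
  else if 1 / (h : ℝ) = θ then x ^ (1 / (h : ℝ)) * Real.log x
  else x ^ (1 / (h : ℝ))

/-- The error term `R_{N_h}(x)` for `h`-full counts. -/
def RNfull (h : ℕ) (θ : ℝ) (x : ℝ) : ℝ :=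
  if (h : ℝ) / ((h : ℝ) + 1) < θ then x ^ (θ / (h : ℝ))
  else if ∃ i : ℕ, 1 ≤ i ∧ i ≤ h - 1 ∧ θ = (h : ℝ) / ((h : ℝ) + (i : ℝ)) then
    x ^ (1 / ((h : ℝ) + 1)) * Real.log x
  else x ^ (1 / ((h : ℝ) + 1))

section Helpers

variable {P : Type*} {N : P → ℕ}

/-- elements of norm at most `x` -/
def MS (N : P → ℕ) (x : ℝ) : Set (P →₀ ℕ) := {m | (Nm N m : ℝ) ≤ x}

/-- counting function -/
def Cnt (N : P → ℕ) (x : ℝ) : ℝ := ((MS N x).ncard : ℝ)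

lemma Nm_add (a b : P →₀ ℕ) : Nm N (a + b) = Nm N a * Nm N b := by
  unfold Nm
  exact Finsupp.prod_add_index' (by simp) (by intros; exact pow_add _ _ _)

lemma Nm_single (p : P) (k : ℕ) : Nm N (Finsupp.single p k) = N p ^ k := by
  unfold Nm
  simp [Finsupp.prod_single_index]

lemma Nm_pos (hN : ∀ p, 2 ≤ N p) (m : P →₀ ℕ) : 1 ≤ Nm N m := by
  unfold Nm Finsupp.prod
  exact Finset.one_le_prod' (fun p _ => Nat.one_le_pow _ _ (by have := hN p; omega))

lemma Nm_le_of_le (hN : ∀ p, 2 ≤ N p) {a b : P →₀ ℕ} (h : a ≤ b) : Nm N a ≤ Nm N b := by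
  obtain ⟨c, rfl⟩ := exists_add_of_le h
  rw [Nm_add]
  exact Nat.le_mul_of_pos_right _ (Nm_pos hN c)

lemma star_tendsto {κ θ : ℝ} (hs : StarCond N κ θ) :
    Tendsto (fun x => Cnt N x / x) atTop (𝓝 κ) := by
  obtain ⟨hκ, h0, h1, hO⟩ := hs
  have h2 : (fun x : ℝ => x ^ θ) =o[atTop] fun x : ℝ => x := by
    rw [isLittleO_iff_tendsto' (by
      filter_upwards [eventually_gt_atTop 0] with x hx h
      exact absurd h hx.ne')]
    refine (tendsto_rpow_neg_atTop (show 0 < 1 - θ by linarith)).congr' ?_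
    filter_upwards [eventually_gt_atTop 0] with x hx
    rw [neg_sub, Real.rpow_sub hx, Real.rpow_one]
  have h3 := (hO.trans_isLittleO h2).tendsto_div_nhds_zero
  have h4 := h3.add_const κ
  rw [zero_add] at h4
  refine h4.congr' ?_
  filter_upwards [eventually_gt_atTop 0] with x hx
  change (Cnt N x - κ * x) / x + κ = _
  field_simp
  ring

lemma MS_mono {x y : ℝ} (h : x ≤ y) : MS N x ⊆ MS N y := fun _ hm => le_trans hm h

lemma MS_finite {κ : ℝ} (hκ : 0 < κ) (hC : Tendsto (fun x => Cnt N x / x) atTop (𝓝 κ)) (x : ℝ) :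
    (MS N x).Finite := by
  have h1 := hC.eventually (lt_mem_nhds hκ)
  obtain ⟨y, hy, hxy⟩ := (h1.and (eventually_ge_atTop x)).exists
  refine Set.Finite.subset ?_ (MS_mono hxy)
  by_contra hinf
  have : Cnt N y = 0 := by
    unfold Cnt
    rw [Set.Infinite.ncard hinf]; simp
  rw [this] at hy
  simp at hy

lemma Cnt_bound (hN : ∀ p, 2 ≤ N p) {κ : ℝ} (hκ : 0 < κ)
    (hC : Tendsto (fun x => Cnt N x / x) atTop (𝓝 κ)) :
    ∃ C > 0, ∀ x, 0 ≤ x → Cnt N x ≤ C * x := by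
  have hfin := MS_finite hκ hC
  have h1 := hC.eventually (gt_mem_nhds (show κ < κ + 1 by linarith))
  obtain ⟨y, hy⟩ := eventually_atTop.1 h1
  have hmono : ∀ a b, a ≤ b → Cnt N a ≤ Cnt N b := fun a b hab => by
    unfold Cnt
    exact_mod_cast Set.ncard_le_ncard (MS_mono hab) (hfin b)
  have hCy : 0 ≤ Cnt N y := by unfold Cnt; positivity
  refine ⟨κ + 1 + Cnt N y, by linarith, fun x hx => ?_⟩
  rcases lt_or_ge x 1 with h | h
  · have : MS N x = ∅ := by
      ext m
      simp only [MS, Set.mem_ofPred_eq, Set.mem_empty_iff_false, iff_false, not_le]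
      have := Nm_pos hN m
      have : (1:ℝ) ≤ Nm N m := by exact_mod_cast this
      linarith
    unfold Cnt at *
    rw [this]
    simp
    positivity
  · rcases le_total x y with h' | h'
    · have := hmono x y h'
      nlinarith
    · have := hy x h'
      rw [div_lt_iff₀ (by linarith)] at this
      nlinarith

lemma Cnt_mult (hN : ∀ p, 2 ≤ N p) (d : P →₀ ℕ) (x : ℝ) :
    ({m | d ≤ m ∧ (Nm N m : ℝ) ≤ x}.ncard : ℝ) = Cnt N (x / Nm N d) := by
  have hd : (0:ℝ) < Nm N d := by exact_mod_cast Nm_pos hN d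
  have : {m | d ≤ m ∧ (Nm N m : ℝ) ≤ x} = (fun m => d + m) '' MS N (x / Nm N d) := by
    ext m
    simp only [Set.mem_ofPred_eq, MS, Set.mem_image]
    constructor
    · rintro ⟨h1, h2⟩
      obtain ⟨c, rfl⟩ := exists_add_of_le h1
      refine ⟨c, ?_, rfl⟩
      rw [Nm_add] at h2
      push_cast at h2
      rw [le_div_iff₀ hd]; linarith
    · rintro ⟨c, hc, rfl⟩
      refine ⟨le_self_add, ?_⟩
      rw [Nm_add]
      push_cast
      rw [le_div_iff₀ hd] at hc; linarith
  rw [this, Set.ncard_image_of_injective _ (add_right_injective d)]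
  rfl

/-- zeta -/
def zM (N : P → ℕ) (s : ℝ) : ℝ := ∑' m : P →₀ ℕ, (Nm N m : ℝ) ^ (-s)

/-- fibre count -/
def fc (N : P → ℕ) (n : ℕ) : ℝ := (Nat.card {m : P →₀ ℕ // Nm N m = n} : ℝ)

lemma fc_sum (hN : ∀ p, 2 ≤ N p) (hfin : ∀ x, (MS N x).Finite) (n : ℕ) :
    ∑ k ∈ Finset.Icc 1 n, fc N k = Cnt N n := by
  unfold fc Cnt
  have h1 : (MS N n).ncard = (hfin n).toFinset.card := Set.ncard_eq_toFinset_card _ _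
  rw [h1, Finset.card_eq_sum_card_fiberwise (f := Nm N) (t := Finset.Icc 1 n)]
  · push_cast
    refine Finset.sum_congr rfl fun k hk => ?_
    congr 1
    rw [← Set.ncard_coe_finset]
    change ({m | Nm N m = k} : Set (P →₀ ℕ)).ncard = _
    congr 1
    ext m
    have hk := Finset.mem_Icc.1 hk
    simp only [MS, Finset.coe_filter, Set.Finite.mem_toFinset]
    constructor
    · intro h
      have h : Nm N m = k := h
      refine ⟨?_, h⟩
      change (Nm N m : ℝ) ≤ n
      rw [h]
      exact_mod_cast hk.2
    · intro h
      exact h.2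
  · intro m hm
    have hm : (Nm N m : ℝ) ≤ n := by simpa [MS] using hm
    simp only [Finset.coe_Icc, Set.mem_Icc]
    exact ⟨Nm_pos hN m, by exact_mod_cast hm⟩

lemma fc_zero (hN : ∀ p, 2 ≤ N p) : fc N 0 = 0 := by
  unfold fc
  have : IsEmpty {m : P →₀ ℕ // Nm N m = 0} := ⟨fun m => by
    have := Nm_pos hN m.1
    have := m.2
    omega⟩
  simp

lemma fc_tendsto (hN : ∀ p, 2 ≤ N p) {κ : ℝ} (hκ : 0 < κ)
    (hC : Tendsto (fun x => Cnt N x / x) atTop (𝓝 κ)) :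
    Tendsto (fun n : ℕ => (∑ k ∈ Finset.Icc 1 n, fc N k) / (n : ℝ)) atTop (𝓝 κ) := by
  simp_rw [fc_sum hN (MS_finite hκ hC)]
  exact hC.comp tendsto_natCast_atTop_atTop

lemma term_eq (hN : ∀ p, 2 ≤ N p) (s : ℝ) (n : ℕ) :
    LSeries.term (fun n => (fc N n : ℂ)) s n = ((fc N n * (n:ℝ) ^ (-s) : ℝ) : ℂ) := by
  rcases eq_or_ne n 0 with rfl | hn
  · simp [fc_zero hN]
  · rw [LSeries.term_of_ne_zero hn, Complex.ofReal_mul, Complex.ofReal_cpow (by positivity)]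
    push_cast
    rw [Complex.cpow_neg, div_eq_mul_inv]

lemma zeta_hasSum (hN : ∀ p, 2 ≤ N p) {κ : ℝ} (hκ : 0 < κ)
    (hC : Tendsto (fun x => Cnt N x / x) atTop (𝓝 κ)) {s : ℝ} (hs : 1 < s) :
    Summable (fun m : P →₀ ℕ => (Nm N m : ℝ) ^ (-s)) ∧
      LSeries (fun n => (fc N n : ℂ)) s = (zM N s : ℂ) := by
  have hfin := MS_finite hκ hC
  have hsum : LSeriesSummable (fun n => (fc N n : ℂ)) s := by
    refine LSeriesSummable_of_sum_norm_bigO_and_nonneg (r := 1) ?_ 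
      (fun n => by unfold fc; positivity) zero_le_one (by simpa using hs)
    exact isBigO_atTop_natCast_rpow_of_tendsto_div_rpow (a := κ) (by simpa using fc_tendsto hN hκ hC)
  have hsum' : Summable (fun n : ℕ => fc N n * (n:ℝ) ^ (-s)) := by
    unfold LSeriesSummable at hsum
    rw [show LSeries.term (fun n => (fc N n : ℂ)) s = 
      fun n : ℕ => ((fc N n * (n:ℝ) ^ (-s) : ℝ) : ℂ) from funext (term_eq hN s)] at hsum
    exact_mod_cast hsum
  have hL : LSeries (fun n => (fc N n : ℂ)) s = ((∑' n : ℕ, fc N n * (n:ℝ) ^ (-s) : ℝ) : ℂ) := by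
    unfold LSeries
    rw [Complex.ofReal_tsum]
    exact tsum_congr (term_eq hN s)
  let e := Equiv.sigmaFiberEquiv (Nm N)
  have hfib : ∀ n, Finite {m : P →₀ ℕ // Nm N m = n} := fun n => by
    refine Set.Finite.subset (hfin n) ?_
    intro m hm
    have hm : Nm N m = n := hm
    change (Nm N m : ℝ) ≤ n
    rw [hm]
  have hval : ∀ n, ∑' y : {m : P →₀ ℕ // Nm N m = n}, (Nm N (e ⟨n, y⟩) : ℝ) ^ (-s) 
      = fc N n * (n:ℝ) ^ (-s) := fun n => by
    have : ∀ y : {m : P →₀ ℕ // Nm N m = n}, (Nm N (e ⟨n, y⟩) : ℝ) ^ (-s) = (n:ℝ) ^ (-s) := by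
      intro y
      rw [show Nm N (e ⟨n, y⟩) = n from y.2]
    simp_rw [this]
    rw [tsum_const]
    simp [fc]
  have hS : Summable (fun y => (Nm N (e y) : ℝ) ^ (-s)) := by
    rw [summable_sigma_of_nonneg (fun _ => by positivity)]
    refine ⟨fun n => ?_, ?_⟩
    · have := hfib n
      exact Summable.of_finite
    · exact hsum'.congr (fun n => (hval n).symm)
  refine ⟨e.summable_iff.1 hS, ?_⟩
  rw [hL]
  congr 1
  unfold zM
  rw [← e.tsum_eq (fun m => (Nm N m : ℝ) ^ (-s)), hS.tsum_sigma]
  exact tsum_congr (fun n => (hval n).symm)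

lemma zeta_tendsto (hN : ∀ p, 2 ≤ N p) {κ : ℝ} (hκ : 0 < κ)
    (hC : Tendsto (fun x => Cnt N x / x) atTop (𝓝 κ)) :
    Tendsto (fun s : ℝ => (s - 1) * zM N s) (𝓝[>] 1) (𝓝 κ) := by
  have := LSeries_tendsto_sub_mul_nhds_one_of_tendsto_sum_div_and_nonneg (fc N)
    (fc_tendsto hN hκ hC) (fun n => by unfold fc; positivity)
  rw [← tendsto_ofReal_iff]
  refine this.congr' ?_
  filter_upwards [self_mem_nhdsWithin] with s hs
  rw [(zeta_hasSum hN hκ hC hs).2]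
  push_cast
  rfl

end Helpers
section Helpers2

variable {P : Type*} {N : P → ℕ}

lemma Nm_rpow (m : P →₀ ℕ) (F : Finset P) (hF : m.support ⊆ F) (s : ℝ) :
    (Nm N m : ℝ) ^ s = ∏ p ∈ F, ((N p : ℝ) ^ s) ^ (m p) := by
  have : Nm N m = ∏ p ∈ F, N p ^ m p := Finsupp.prod_of_support_subset _ hF _ (by simp)
  rw [this]
  push_cast
  rw [← Real.finsetProd_rpow _ _ (fun _ _ => by positivity)]
  refine Finset.prod_congr rfl fun p _ => ?_
  rw [← Real.rpow_natCast, ← Real.rpow_natCast, ← Real.rpow_mul (by positivity), 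
    ← Real.rpow_mul (by positivity), mul_comm]

lemma box_sum (F : Finset P) (K : ℕ) (s : ℝ) :
    ∑ m ∈ F.finsupp (fun _ => Finset.range K), (Nm N m : ℝ) ^ s =
      ∏ p ∈ F, ∑ k ∈ Finset.range K, ((N p : ℝ) ^ s) ^ k := by
  rw [Finset.prod_sum]
  unfold Finset.finsupp
  rw [Finset.sum_map]
  refine Finset.sum_congr (by congr!) fun g _ => ?_
  rw [Nm_rpow _ F (by simpa using Finsupp.support_indicator_subset _ _)]
  rw [← Finset.prod_attach]
  refine Finset.prod_congr rfl fun p _ => ?_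
  simp

/-- prime zeta -/
def PZ (N : P → ℕ) (s : ℝ) : ℝ := ∑' p : P, (N p : ℝ) ^ (-s)

lemma PZ_summable (hN : ∀ p, 2 ≤ N p) {κ : ℝ} (hκ : 0 < κ)
    (hC : Tendsto (fun x => Cnt N x / x) atTop (𝓝 κ)) {s : ℝ} (hs : 1 < s) :
    Summable (fun p : P => (N p : ℝ) ^ (-s)) := by
  have h := (zeta_hasSum hN hκ hC hs).1
  have h2 := h.comp_injective (i := fun p : P => Finsupp.single p 1) 
    (Finsupp.single_left_injective one_ne_zero)
  refine h2.congr fun p => ?_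
  simp [Nm_single]

lemma u_bounds (hN : ∀ p, 2 ≤ N p) {s : ℝ} (hs : 1 < s) (p : P) :
    0 < (N p : ℝ) ^ (-s) ∧ (N p : ℝ) ^ (-s) ≤ 1 / 2 ∧ 
      ((N p : ℝ) ^ (-s)) ^ 2 ≤ (N p : ℝ) ^ (-2 : ℝ) := by
  have h2 : (2:ℝ) ≤ N p := by exact_mod_cast hN p
  have h3 : (N p : ℝ) ^ (-s) ≤ (N p : ℝ)^(-1:ℝ) := 
    Real.rpow_le_rpow_of_exponent_le (by linarith) (by linarith)
  have hpos : 0 < (N p : ℝ) ^ (-s) := by positivity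
  refine ⟨hpos, ?_, ?_⟩
  · refine h3.trans ?_
    rw [Real.rpow_neg_one, one_div]
    exact inv_anti₀ (by norm_num) h2
  · calc _ ≤ ((N p : ℝ)^(-1:ℝ))^2 := by gcongr
      _ = _ := by
        rw [← Real.rpow_natCast, ← Real.rpow_mul (by positivity)]; norm_num

lemma exp_lo {u : ℝ} (h0 : 0 < u) (h1 : u ≤ 1 / 2) : Real.exp (u - 2 * u ^ 2) ≤ 1 + u := by
  rw [← Real.le_log_iff_exp_le (by linarith)]
  refine le_trans ?_ (Real.one_sub_inv_le_log_of_pos (by linarith))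
  rw [← sub_nonneg]
  have : 1 - (1 + u)⁻¹ - (u - 2 * u ^ 2) = (u ^ 2 + 2 * u ^ 3) / (1 + u) := by
    field_simp
    ring
  rw [this]
  positivity

lemma exp_hi {u : ℝ} (h0 : 0 < u) (h1 : u ≤ 1 / 2) : (1 - u)⁻¹ ≤ Real.exp (u + 2 * u ^ 2) := by
  rw [← Real.log_le_iff_le_exp (by rw [inv_pos]; linarith), Real.log_inv]
  have := (Real.one_sub_inv_le_log_of_pos (show 0 < 1 - u by linarith))
  have h2 : u + 2 * u ^ 2 - ((1 - u)⁻¹ - 1) = u ^ 2 * (1 - 2 * u) / (1 - u) := by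
    have : 1 - u ≠ 0 := by linarith
    field_simp
    ring
  have h3 : 0 ≤ u ^ 2 * (1 - 2 * u) / (1 - u) := by
    apply div_nonneg
    · apply mul_nonneg (by positivity); linarith
    · linarith
  linarith

lemma sum_sq_le (hN : ∀ p, 2 ≤ N p) {κ : ℝ} (hκ : 0 < κ)
    (hC : Tendsto (fun x => Cnt N x / x) atTop (𝓝 κ)) {s : ℝ} (hs : 1 < s) (F : Finset P) :
    ∑ p ∈ F, ((N p : ℝ) ^ (-s)) ^ 2 ≤ PZ N 2 := by
  calc _ ≤ ∑ p ∈ F, (N p : ℝ) ^ (-2:ℝ) := Finset.sum_le_sum fun p _ => (u_bounds hN hs p).2.2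
    _ ≤ _ := (PZ_summable hN hκ hC (by norm_num)).sum_le_tsum _ (fun _ _ => by positivity)

lemma euler_lo (hN : ∀ p, 2 ≤ N p) {κ : ℝ} (hκ : 0 < κ)
    (hC : Tendsto (fun x => Cnt N x / x) atTop (𝓝 κ)) {s : ℝ} (hs : 1 < s) :
    Real.exp (PZ N s - 2 * PZ N 2) ≤ zM N s := by
  have hS := PZ_summable hN hκ hC hs
  have ht : Tendsto (fun F : Finset P => Real.exp ((∑ p ∈ F, (N p : ℝ) ^ (-s)) - 2 * PZ N 2)) atTop
      (𝓝 (Real.exp (PZ N s - 2 * PZ N 2))) := 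
    (Real.continuous_exp.tendsto _).comp ((show Tendsto (fun F : Finset P => ∑ p ∈ F, (N p : ℝ) ^ (-s)) atTop (𝓝 (PZ N s)) by
      simpa [HasSum, PZ] using hS.hasSum).sub_const _)
  refine le_of_tendsto' ht fun F => ?_
  have hq := sum_sq_le hN hκ hC hs F
  calc _ ≤ Real.exp (∑ p ∈ F, ((N p : ℝ) ^ (-s) - 2 * ((N p : ℝ) ^ (-s)) ^ 2)) := by
        rw [Finset.sum_sub_distrib, ← Finset.mul_sum]
        gcongr
    _ = ∏ p ∈ F, Real.exp ((N p : ℝ) ^ (-s) - 2 * ((N p : ℝ) ^ (-s)) ^ 2) := Real.exp_sum _ _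
    _ ≤ ∏ p ∈ F, ∑ k ∈ Finset.range 2, ((N p : ℝ) ^ (-s)) ^ k := by
        refine Finset.prod_le_prod (fun _ _ => by positivity) fun p _ => ?_
        have := u_bounds hN hs p
        refine (exp_lo this.1 this.2.1).trans ?_
        simp [Finset.sum_range_succ]
    _ = _ := (box_sum F 2 (-s)).symm
    _ ≤ _ := (zeta_hasSum hN hκ hC hs).1.sum_le_tsum _ (fun _ _ => by positivity)

lemma euler_hi (hN : ∀ p, 2 ≤ N p) {κ : ℝ} (hκ : 0 < κ)
    (hC : Tendsto (fun x => Cnt N x / x) atTop (𝓝 κ)) {s : ℝ} (hs : 1 < s) :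
    zM N s ≤ Real.exp (PZ N s + 2 * PZ N 2) := by
  have hS := PZ_summable hN hκ hC hs
  refine (zeta_hasSum hN hκ hC hs).1.tsum_le_of_sum_le fun T => ?_
  let F : Finset P := T.biUnion (fun m => m.support)
  let K : ℕ := (T.sup (fun m => m.support.sup m)) + 1
  have hsub : T ⊆ F.finsupp (fun _ => Finset.range K) := by
    intro m hm
    rw [Finset.mem_finsupp_iff]
    refine ⟨Finset.subset_biUnion_of_mem (fun m : P →₀ ℕ => m.support) hm, fun p _ => ?_⟩
    rw [Finset.mem_range, Nat.lt_succ_iff]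
    by_cases hp : p ∈ m.support
    · exact (Finset.le_sup (f := m) hp).trans 
        (Finset.le_sup (f := fun m : P →₀ ℕ => m.support.sup m) hm)
    · rw [Finsupp.notMem_support_iff.1 hp]; exact Nat.zero_le _
  have hq := sum_sq_le hN hκ hC hs F
  calc _ ≤ ∑ m ∈ F.finsupp (fun _ => Finset.range K), (Nm N m : ℝ) ^ (-s) := 
        Finset.sum_le_sum_of_subset_of_nonneg hsub (fun _ _ _ => by positivity)
    _ = _ := box_sum F K (-s)
    _ ≤ ∏ p ∈ F, Real.exp ((N p : ℝ) ^ (-s) + 2 * ((N p : ℝ) ^ (-s)) ^ 2) := by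
        refine Finset.prod_le_prod (fun _ _ => by positivity) fun p _ => ?_
        have := u_bounds hN hs p
        refine le_trans ?_ (exp_hi this.1 this.2.1)
        rw [← tsum_geometric_of_lt_one this.1.le (by linarith)]
        exact (summable_geometric_of_lt_one this.1.le (by linarith)).sum_le_tsum _ 
          (fun _ _ => by have := this.1; positivity)
    _ = Real.exp (∑ p ∈ F, ((N p : ℝ) ^ (-s) + 2 * ((N p : ℝ) ^ (-s)) ^ 2)) := 
        (Real.exp_sum _ _).symm
    _ ≤ _ := by
        rw [Finset.sum_add_distrib, ← Finset.mul_sum]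
        have := hS.sum_le_tsum F (fun _ _ => by positivity)
        unfold PZ at *
        gcongr

lemma PZ_asymp (hN : ∀ p, 2 ≤ N p) {κ : ℝ} (hκ : 0 < κ)
    (hC : Tendsto (fun x => Cnt N x / x) atTop (𝓝 κ)) {c : ℝ} (hc : 0 < c) :
    ∃ K, ∀ᶠ x in atTop, |PZ N (1 + c / Real.log x) - Real.log (Real.log x)| ≤ K := by
  have h1 : Tendsto (fun x : ℝ => 1 + c / Real.log x) atTop (𝓝[>] 1) := by
    rw [tendsto_nhdsWithin_iff]
    constructor
    · have := (Real.tendsto_log_atTop.const_div_atTop c).const_add 1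
      simpa using this
    · filter_upwards [eventually_gt_atTop 1] with x hx
      have := Real.log_pos hx
      simp only [Set.mem_Ioi, lt_add_iff_pos_right]
      positivity
  have h2 := (zeta_tendsto hN hκ hC).comp h1
  have h3 := ((Real.continuousAt_log hκ.ne').tendsto.comp h2)
  have h4 := h3.eventually (Metric.ball_mem_nhds _ one_pos)
  refine ⟨1 + |Real.log κ| + |Real.log c| + 2 * PZ N 2, ?_⟩
  filter_upwards [h4, eventually_gt_atTop 1] with x hx hx1
  have hl := Real.log_pos hx1
  have hs : 1 < 1 + c / Real.log x := by
    simp only [lt_add_iff_pos_right]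
    positivity
  have hlo := euler_lo hN hκ hC hs
  have hhi := euler_hi hN hκ hC hs
  have hz : 0 < zM N (1 + c / Real.log x) := lt_of_lt_of_le (Real.exp_pos _) hlo
  rw [← Real.le_log_iff_exp_le hz] at hlo
  rw [← Real.log_le_iff_le_exp hz] at hhi
  simp only [Function.comp_apply, Real.dist_eq] at hx
  rw [add_sub_cancel_left, Real.log_mul (by positivity) hz.ne', 
    Real.log_div hc.ne' hl.ne'] at hx
  have := abs_lt.1 hx
  have a1 := neg_abs_le (Real.log κ)
  have a2 := neg_abs_le (Real.log c)
  have a3 := le_abs_self (Real.log κ)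
  have a4 := le_abs_self (Real.log c)
  rw [abs_le]
  constructor <;> linarith

lemma primes_finite (hfin : ∀ x, (MS N x).Finite) (x : ℝ) : {p : P | (N p : ℝ) ≤ x}.Finite := by
  refine Set.Finite.of_finite_image (f := fun p : P => Finsupp.single p 1) 
    ((hfin x).subset ?_) (Finsupp.single_left_injective one_ne_zero).injOn
  rintro _ ⟨p, hp, rfl⟩
  change (Nm N _ : ℝ) ≤ x
  rw [Nm_single]
  simpa using hp

end Helpers2
section Helpers3

variable {P : Type*} {N : P → ℕ}

/-- primes of norm at most `x` -/
def PF (N : P → ℕ) (x : ℝ) : Finset P :=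
  if h : {p : P | (N p : ℝ) ≤ x}.Finite then h.toFinset else ∅

lemma mem_PF (hfin : ∀ x, (MS N x).Finite) {x : ℝ} {p : P} : p ∈ PF N x ↔ (N p : ℝ) ≤ x := by
  unfold PF
  rw [dif_pos (primes_finite hfin x)]
  simp

/-- the Mertens sum -/
def LP (N : P → ℕ) (x : ℝ) : ℝ := ∑ p ∈ PF N x, 1 / (N p : ℝ)

lemma tendsto_loglog : Tendsto (fun x : ℝ => Real.log (Real.log x)) atTop atTop :=
  Real.tendsto_log_atTop.comp Real.tendsto_log_atTop

lemma mertens_hi (hN : ∀ p, 2 ≤ N p) {κ : ℝ} (hκ : 0 < κ)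
    (hC : Tendsto (fun x => Cnt N x / x) atTop (𝓝 κ)) {δ : ℝ} (hδ : 0 < δ) :
    ∀ᶠ x in atTop, LP N x ≤ (1 + δ) * Real.log (Real.log x) := by
  have hη : 0 < Real.log (1 + δ / 2) := Real.log_pos (by linarith)
  obtain ⟨K, hK⟩ := PZ_asymp hN hκ hC hη
  filter_upwards [hK, eventually_gt_atTop 1, 
    tendsto_loglog.eventually (eventually_ge_atTop ((1 + δ / 2) * K / (δ / 2)))] with x hx hx1 hl
  rw [div_le_iff₀ (by linarith)] at hl
  have hlog := Real.log_pos hx1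
  set a := Real.log (1 + δ / 2) / Real.log x with ha
  have hapos : 0 < a := by positivity
  have h1 : LP N x ≤ (1 + δ / 2) * PZ N (1 + a) := by
    unfold LP
    calc _ ≤ ∑ p ∈ PF N x, (1 + δ / 2) * (N p : ℝ) ^ (-(1 + a)) := by
          refine Finset.sum_le_sum fun p hp => ?_
          rw [mem_PF (MS_finite hκ hC)] at hp
          have h2 : (2:ℝ) ≤ N p := by exact_mod_cast hN p
          have h3 : (N p : ℝ) ^ a ≤ 1 + δ / 2 := by
            calc _ ≤ x ^ a := Real.rpow_le_rpow (by positivity) hp hapos.le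
              _ = 1 + δ / 2 := by
                rw [Real.rpow_def_of_pos (by linarith), ha, mul_div_cancel₀ _ hlog.ne', 
                  Real.exp_log (by linarith)]
          rw [Real.rpow_neg (by positivity), Real.rpow_add (by positivity), Real.rpow_one]
          have h4 : 0 < (N p : ℝ) ^ a := by positivity
          rw [← div_eq_mul_inv, div_le_div_iff₀ (by positivity) (by positivity)]
          nlinarith
      _ = (1 + δ / 2) * ∑ p ∈ PF N x, (N p : ℝ) ^ (-(1 + a)) := by rw [Finset.mul_sum]
      _ ≤ _ := by
          have := (PZ_summable hN hκ hC (show 1 < 1 + a by linarith)).sum_le_tsum (PF N x)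
            (fun _ _ => by positivity)
          unfold PZ
          gcongr
  have := (abs_le.1 hx).2
  nlinarith

lemma mertens_lo (hN : ∀ p, 2 ≤ N p) {κ : ℝ} (hκ : 0 < κ)
    (hC : Tendsto (fun x => Cnt N x / x) atTop (𝓝 κ)) {δ : ℝ} (hδ : 0 < δ) (hδ1 : δ ≤ 1) :
    ∀ᶠ x in atTop, (1 - δ) * Real.log (Real.log x) ≤ LP N x := by
  have hη : 0 < Real.log (2 / δ) := Real.log_pos (by rw [lt_div_iff₀ hδ]; linarith)
  obtain ⟨K, hK⟩ := PZ_asymp hN hκ hC (c := 1 + Real.log (2 / δ)) (by linarith)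
  obtain ⟨K', hK'⟩ := PZ_asymp hN hκ hC one_pos
  filter_upwards [hK, hK', eventually_gt_atTop 1, 
    tendsto_loglog.eventually (eventually_ge_atTop ((K + δ / 2 * K') / (δ / 2)))] 
    with x hx hx' hx1 hl
  rw [div_le_iff₀ (by linarith)] at hl
  have hlog := Real.log_pos hx1
  set a := (1 + Real.log (2 / δ)) / Real.log x with ha
  set b := 1 / Real.log x with hb
  have hab : a = b + Real.log (2 / δ) / Real.log x := by rw [ha, hb, add_div]
  set d := Real.log (2 / δ) / Real.log x with hd
  have hdpos : 0 < d := by positivity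
  have hbpos : 0 < b := by positivity
  have hapos : 0 < a := by linarith
  have hSa := PZ_summable hN hκ hC (show 1 < 1 + a by linarith)
  have hSb := PZ_summable hN hκ hC (show 1 < 1 + b by linarith)
  have hI : HasSum (fun p => if p ∈ PF N x then 1 / (N p : ℝ) else 0) (LP N x) := by
    have := hasSum_sum_of_ne_finset_zero (f := fun p => if p ∈ PF N x then 1 / (N p : ℝ) else 0)
      (s := PF N x) (L := SummationFilter.unconditional P) (fun p hp => if_neg hp)
    convert this using 1
    unfold LP
    exact Finset.sum_congr rfl fun p hp => (if_pos hp).symm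
  have h1 : PZ N (1 + a) ≤ LP N x + δ / 2 * PZ N (1 + b) := by
    refine hasSum_le ?_ hSa.hasSum (hI.add (hSb.hasSum.mul_left (δ / 2)))
    intro p
    have h2 : (2:ℝ) ≤ N p := by exact_mod_cast hN p
    have h0 : 0 < δ / 2 * (N p : ℝ) ^ (-(1 + b)) := by positivity
    by_cases hp : p ∈ PF N x
    · simp only [hp, if_true]
      have : (N p : ℝ) ^ (-(1 + a)) ≤ (N p : ℝ) ^ (-1 : ℝ) := 
        Real.rpow_le_rpow_of_exponent_le (by linarith) (by linarith)
      rw [Real.rpow_neg_one, ← one_div] at this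
      linarith
    · simp only [hp, if_false, zero_add]
      rw [mem_PF (MS_finite hκ hC), not_le] at hp
      rw [hab, show -(1 + (b + d)) = (-d) + (-(1 + b)) by ring, Real.rpow_add (by positivity)]
      gcongr
      calc (N p : ℝ) ^ (-d) ≤ x ^ (-d) := 
            Real.rpow_le_rpow_of_nonpos (by linarith) hp.le (by linarith)
        _ = δ / 2 := by
            rw [Real.rpow_neg (by linarith), Real.rpow_def_of_pos (by linarith), hd, 
              mul_div_cancel₀ _ hlog.ne', Real.exp_log (by positivity), inv_div]
  have e1 := (abs_le.1 hx).1
  have e2 := (abs_le.1 hx').2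
  nlinarith

lemma hfree_lo (hN : ∀ p, 2 ≤ N p) {κ : ℝ} (hκ : 0 < κ)
    (hC : Tendsto (fun x => Cnt N x / x) atTop (𝓝 κ)) {h : ℕ} (hh : 2 ≤ h) :
    ∃ c > 0, ∀ᶠ x in atTop, c * x ≤ ({m : P →₀ ℕ | HFree h m ∧ (Nm N m : ℝ) ≤ x}.ncard : ℝ) := by
  have hfin := MS_finite hκ hC
  obtain ⟨C, hC0, hCb⟩ := Cnt_bound hN hκ hC
  have hS := (zeta_hasSum hN hκ hC (s := 2) (by norm_num)).1
  obtain ⟨D, hD⟩ := hS.vanishing (Metric.ball_mem_nhds 0 (show 0 < κ / (4 * C) by positivity))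
  refine ⟨κ / (4 * (D.card + 1)), by positivity, ?_⟩
  filter_upwards [hC.eventually (lt_mem_nhds (show κ / 2 < κ by linarith)), 
    eventually_gt_atTop 0] with x hx hx0
  rw [lt_div_iff₀ hx0] at hx
  have hSfin : {m : P →₀ ℕ | HFree h m ∧ (Nm N m : ℝ) ≤ x}.Finite := 
    (hfin x).subset (fun m hm => hm.2)
  set A := (hfin x).toFinset with hA
  set S := hSfin.toFinset with hSdef
  set T := A \ D with hT
  have hcover : A ⊆ D.biUnion (fun d => S.image (fun m => 2 • d + m)) ∪ 
      T.biUnion (fun d => A.filter (fun m => 2 • d ≤ m)) := by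
    intro m hm
    have hm' : (Nm N m : ℝ) ≤ x := by simpa [hA, MS] using hm
    let d : P →₀ ℕ := m.mapRange (fun k => k / 2) (by simp)
    let r : P →₀ ℕ := m.mapRange (fun k => k % 2) (by simp)
    have hdr : 2 • d + r = m := by
      ext p
      simp only [d, r, Finsupp.add_apply, Finsupp.smul_apply, Finsupp.mapRange_apply, smul_eq_mul]
      omega
    have hle : 2 • d ≤ m := by rw [← hdr]; exact le_self_add
    have hrm : r ≤ m := by 
      conv_rhs => rw [← hdr]
      exact le_add_self
    have hdm : d ≤ m := le_trans (by rw [two_nsmul]; exact le_self_add) hle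
    have hmem : ∀ c, c ≤ m → (Nm N c : ℝ) ≤ x := fun c hc => 
      le_trans (by exact_mod_cast Nm_le_of_le hN hc) hm'
    rw [Finset.mem_union, Finset.mem_biUnion, Finset.mem_biUnion]
    by_cases hd : d ∈ D
    · left
      refine ⟨d, hd, Finset.mem_image.2 ⟨r, ?_, hdr⟩⟩
      rw [hSdef, Set.Finite.mem_toFinset]
      refine ⟨fun p => ?_, hmem r hrm⟩
      simp only [r, Finsupp.mapRange_apply]
      omega
    · right
      refine ⟨d, ?_, Finset.mem_filter.2 ⟨hm, hle⟩⟩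
      rw [hT, Finset.mem_sdiff]
      refine ⟨?_, hd⟩
      rw [hA, Set.Finite.mem_toFinset]
      exact hmem d hdm
  have h1 : (A.card : ℝ) = Cnt N x := by
    unfold Cnt
    rw [Set.ncard_eq_toFinset_card _ (hfin x)]
  have h2 : (S.card : ℝ) = ({m : P →₀ ℕ | HFree h m ∧ (Nm N m : ℝ) ≤ x}.ncard : ℝ) := by
    rw [Set.ncard_eq_toFinset_card _ hSfin]
  have h3 : ∀ d, ((A.filter (fun m => 2 • d ≤ m)).card : ℝ) ≤ C * x * (Nm N d : ℝ) ^ (-2:ℝ) := by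
    intro d
    have hd : (0:ℝ) < Nm N d := by exact_mod_cast Nm_pos hN d
    have := Cnt_mult hN (2 • d) x
    have h4 : ((A.filter (fun m => 2 • d ≤ m)).card : ℝ) = 
        ({m | 2 • d ≤ m ∧ (Nm N m : ℝ) ≤ x}.ncard : ℝ) := by
      rw [← Set.ncard_coe_finset]
      congr 2
      ext m
      simp only [hA, Finset.coe_filter, Set.Finite.mem_toFinset]
      exact and_comm
    rw [h4, this]
    refine (hCb _ (by positivity)).trans (le_of_eq ?_)
    rw [two_nsmul, Nm_add, Real.rpow_neg hd.le, Real.rpow_two]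
    push_cast
    field_simp
  have h5 : (A.card : ℝ) ≤ D.card * S.card + ∑ d ∈ T, C * x * (Nm N d : ℝ) ^ (-2:ℝ) := by
    have i1 := Finset.card_le_card hcover
    have i2 := i1.trans (Finset.card_union_le _ _)
    have i3 : (D.biUnion (fun d => S.image (fun m => 2 • d + m))).card ≤ D.card * S.card := 
      Finset.card_biUnion_le_card_mul _ _ _ (fun d _ => Finset.card_image_le)
    have i4 : (T.biUnion (fun d => A.filter (fun m => 2 • d ≤ m))).card ≤ 
      ∑ d ∈ T, (A.filter (fun m => 2 • d ≤ m)).card := Finset.card_biUnion_le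
    have i5 : (A.card : ℝ) ≤ D.card * S.card + 
        ∑ d ∈ T, ((A.filter (fun m => 2 • d ≤ m)).card : ℝ) := by
      exact_mod_cast i2.trans (add_le_add i3 i4)
    exact i5.trans (by gcongr with d _; exact h3 d)
  have h6 := hD T Finset.sdiff_disjoint
  rw [mem_ball_zero_iff, Real.norm_eq_abs] at h6
  have h7 := (abs_lt.1 h6).2
  rw [← Finset.mul_sum] at h5
  have h8 : C * x * ∑ d ∈ T, (Nm N d : ℝ) ^ (-2:ℝ) ≤ κ / 4 * x := by
    calc _ ≤ C * x * (κ / (4 * C)) := by gcongr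
      _ = _ := by field_simp
  rw [← h2, div_mul_eq_mul_div, div_le_iff₀ (by positivity)]
  have : (0:ℝ) ≤ S.card := by positivity
  nlinarith

end Helpers3
section Helpers4

variable {P : Type*} {N : P → ℕ}

/-- truncated omega -/
def Wt (F : Finset P) (m : P →₀ ℕ) : ℝ := ∑ p ∈ F, if Finsupp.single p 1 ≤ m then (1:ℝ) else 0

lemma sum_ind (hN : ∀ p, 2 ≤ N p) (hfin : ∀ x, (MS N x).Finite) (x : ℝ) (d : P →₀ ℕ) :
    ∑ m ∈ (hfin x).toFinset, (if d ≤ m then (1:ℝ) else 0) = Cnt N (x / Nm N d) := by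
  rw [← Cnt_mult hN, Finset.sum_boole, ← Set.ncard_coe_finset]
  congr 2
  ext m
  simp only [Finset.coe_filter, Set.Finite.mem_toFinset]
  exact and_comm

lemma turan (hN : ∀ p, 2 ≤ N p) (hfin : ∀ x, (MS N x).Finite) {κ : ℝ} (hκ : 0 < κ)
    {y e : ℝ} (he : 0 ≤ e) (he1 : e ≤ 1) (hy : 1 ≤ y)
    (H : ∀ t, y ^ 2 ≤ t → |Cnt N t - κ * t| ≤ e * (κ * t)) :
    ∑ m ∈ (hfin (y ^ 4)).toFinset, (Wt (PF N y) m - LP N y) ^ 2 ≤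
      κ * y ^ 4 * (4 * e * LP N y ^ 2 + 2 * LP N y) := by
  set A := (hfin (y ^ 4)).toFinset
  set F := PF N y
  set L := LP N y with hL
  have hLs : ∑ p ∈ F, 1 / (N p : ℝ) = L := rfl
  have hL0 : 0 ≤ L := by rw [← hLs]; positivity
  have hF : ∀ p ∈ F, 0 < (N p : ℝ) ∧ (N p : ℝ) ≤ y := fun p hp => by
    have h2 : (2:ℝ) ≤ N p := by exact_mod_cast hN p
    exact ⟨by linarith, (mem_PF hfin).1 hp⟩
  -- second moment
  have hpq : ∀ p ∈ F, ∀ q ∈ F, ∑ m ∈ A, (if Finsupp.single p 1 ≤ m then (1:ℝ) else 0) * 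
      (if Finsupp.single q 1 ≤ m then (1:ℝ) else 0) ≤ (1 + e) * κ * y ^ 4 * 
      (1 / (N p : ℝ) * (1 / (N q : ℝ)) + if p = q then 1 / (N p : ℝ) else 0) := by
    intro p hp q hq
    obtain ⟨hp0, hpy⟩ := hF p hp
    obtain ⟨hq0, hqy⟩ := hF q hq
    by_cases hpq : p = q
    · subst hpq
      have h1 : ∀ m : P →₀ ℕ, (if Finsupp.single p 1 ≤ m then (1:ℝ) else 0) * 
        (if Finsupp.single p 1 ≤ m then (1:ℝ) else 0) = 
          if Finsupp.single p 1 ≤ m then (1:ℝ) else 0 := fun m => by split_ifs <;> simp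
      simp_rw [h1]
      rw [sum_ind hN hfin, Nm_single, pow_one]
      have h2 : y ^ 2 ≤ y ^ 4 / N p := by
        rw [le_div_iff₀ hp0]
        calc y ^ 2 * N p ≤ y ^ 2 * y ^ 2 := by gcongr; nlinarith
          _ = y ^ 4 := by ring
      have h3 := (abs_le.1 (H _ h2)).2
      have h4 : Cnt N (y ^ 4 / N p) ≤ (1 + e) * κ * y ^ 4 * (1 / N p) := by
        have : (1 + e) * κ * y ^ 4 * (1 / N p) = (1 + e) * (κ * (y ^ 4 / N p)) := by ring
        rw [this]; linarith
      refine h4.trans ?_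
      simp only [if_true]
      gcongr
      have : 0 < 1 / (N p : ℝ) * (1 / (N p : ℝ)) := by positivity
      linarith
    · have h1 : ∀ m : P →₀ ℕ, (if Finsupp.single p 1 ≤ m then (1:ℝ) else 0) * 
        (if Finsupp.single q 1 ≤ m then (1:ℝ) else 0) = 
          if Finsupp.single p 1 + Finsupp.single q 1 ≤ m then (1:ℝ) else 0 := fun m => by
        have : Finsupp.single p 1 + Finsupp.single q 1 ≤ m ↔ 
            Finsupp.single p 1 ≤ m ∧ Finsupp.single q 1 ≤ m := by
          constructor
          · intro h
            exact ⟨le_trans le_self_add h, le_trans le_add_self h⟩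
          · rintro ⟨h1, h2⟩ r
            have h1 := h1 r
            have h2 := h2 r
            simp only [Finsupp.add_apply, Finsupp.single_apply] at *
            split_ifs at * <;> first | omega | (exfalso; apply hpq; simp_all)
        rw [if_congr this rfl rfl]
        by_cases h1 : Finsupp.single p 1 ≤ m <;> by_cases h2 : Finsupp.single q 1 ≤ m <;> 
          simp only [h1, h2] <;> simp
      simp_rw [h1]
      rw [sum_ind hN hfin, Nm_add, Nm_single, Nm_single, pow_one, pow_one]
      push_cast
      have h2 : y ^ 2 ≤ y ^ 4 / (N p * N q) := by
        rw [le_div_iff₀ (by positivity)]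
        calc y ^ 2 * (N p * N q) ≤ y ^ 2 * (y * y) := by gcongr
          _ = y ^ 4 := by ring
      have h3 := (abs_le.1 (H _ h2)).2
      simp only [hpq, if_false, add_zero]
      have : (1 + e) * κ * y ^ 4 * (1 / (N p : ℝ) * (1 / N q)) = 
        (1 + e) * (κ * (y ^ 4 / (N p * N q))) := by field_simp
      rw [this]; linarith
  have hW2 : ∑ m ∈ A, Wt F m ^ 2 ≤ (1 + e) * κ * y ^ 4 * (L ^ 2 + L) := by
    have h1 : ∑ m ∈ A, Wt F m ^ 2 = ∑ p ∈ F, ∑ q ∈ F, ∑ m ∈ A, 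
        (if Finsupp.single p 1 ≤ m then (1:ℝ) else 0) * 
        (if Finsupp.single q 1 ≤ m then (1:ℝ) else 0) := by
      unfold Wt
      simp_rw [pow_two, Finset.sum_mul_sum]
      rw [Finset.sum_comm]
      refine Finset.sum_congr rfl fun p _ => ?_
      rw [Finset.sum_comm]
    rw [h1]
    refine (Finset.sum_le_sum fun p hp => Finset.sum_le_sum fun q hq => hpq p hp q hq).trans 
      (le_of_eq ?_)
    simp_rw [← Finset.mul_sum, Finset.sum_add_distrib]
    rw [← Finset.sum_mul_sum, hLs]
    have : ∑ p ∈ F, ∑ q ∈ F, (if p = q then 1 / (N p : ℝ) else 0) = L := by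
      rw [← hLs]
      refine Finset.sum_congr rfl fun p hp => ?_
      rw [Finset.sum_ite_eq, if_pos hp]
    rw [this, pow_two]
  have hW1 : (1 - e) * κ * y ^ 4 * L ≤ ∑ m ∈ A, Wt F m := by
    unfold Wt
    rw [Finset.sum_comm, ← hLs, Finset.mul_sum]
    refine Finset.sum_le_sum fun p hp => ?_
    obtain ⟨hp0, hpy⟩ := hF p hp
    rw [sum_ind hN hfin, Nm_single, pow_one]
    have h2 : y ^ 2 ≤ y ^ 4 / N p := by
      rw [le_div_iff₀ hp0]
      calc y ^ 2 * N p ≤ y ^ 2 * y ^ 2 := by gcongr; nlinarith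
        _ = y ^ 4 := by ring
    have h3 := (abs_le.1 (H _ h2)).1
    have : (1 - e) * κ * y ^ 4 * (1 / N p) = (1 - e) * (κ * (y ^ 4 / N p)) := by ring
    rw [this]; linarith
  have hW0 : (A.card : ℝ) ≤ (1 + e) * κ * y ^ 4 := by
    have h1 : (A.card : ℝ) = Cnt N (y ^ 4) := by
      unfold Cnt
      rw [Set.ncard_eq_toFinset_card _ (hfin (y ^ 4))]
    have h2 : y ^ 2 ≤ y ^ 4 := pow_le_pow_right₀ hy (by norm_num)
    have h3 := (abs_le.1 (H _ h2)).2
    rw [h1]; linarith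
  have hexp : ∑ m ∈ A, (Wt F m - L) ^ 2 = 
      ∑ m ∈ A, Wt F m ^ 2 - 2 * L * ∑ m ∈ A, Wt F m + A.card * L ^ 2 := by
    simp_rw [sub_sq]
    rw [Finset.sum_add_distrib, Finset.sum_sub_distrib, Finset.sum_const, nsmul_eq_mul, 
      Finset.mul_sum]
    congr 2
    exact Finset.sum_congr rfl fun _ _ => by ring
  rw [hexp]
  have k1 : (A.card : ℝ) * L ^ 2 ≤ (1 + e) * κ * y ^ 4 * L ^ 2 := by gcongr
  have k2 : 2 * L * ((1 - e) * κ * y ^ 4 * L) ≤ 2 * L * ∑ m ∈ A, Wt F m := by gcongr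
  have k3 : 0 ≤ κ * y ^ 4 * L * (1 - e) := by
    have : 0 ≤ 1 - e := by linarith
    positivity
  nlinarith

lemma omega_diff (hN : ∀ p, 2 ≤ N p) (hfin : ∀ x, (MS N x).Finite) {y : ℝ} (hy : 1 < y) 
    {m : P →₀ ℕ} (hm : (Nm N m : ℝ) ≤ y ^ 4) : 
    |(omegaM m : ℝ) - Wt (PF N y) m| ≤ 4 := by
  have h1 : Wt (PF N y) m = ((m.support.filter (fun p => (N p : ℝ) ≤ y)).card : ℝ) := by
    unfold Wt
    rw [Finset.sum_boole]
    congr 2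
    ext p
    simp only [Finset.mem_filter, mem_PF hfin, Finsupp.mem_support_iff, Finsupp.single_le_iff]
    rw [and_comm, Nat.one_le_iff_ne_zero]
  have h2 : (omegaM m : ℝ) = ((m.support.filter (fun p => (N p : ℝ) ≤ y)).card : ℝ) + 
      ((m.support.filter (fun p => ¬ (N p : ℝ) ≤ y)).card : ℝ) := by
    unfold omegaM
    rw [← Finset.card_filter_add_card_filter_not (s := m.support) (fun p => (N p : ℝ) ≤ y)]
    push_cast
    rfl
  set B := m.support.filter (fun p => ¬ (N p : ℝ) ≤ y) with hB
  have h3 : y ^ B.card ≤ y ^ 4 := by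
    refine le_trans ?_ hm
    calc y ^ B.card ≤ ∏ p ∈ B, (N p : ℝ) ^ (m p) := by
          rw [← Finset.prod_const]
          refine Finset.prod_le_prod (fun _ _ => by linarith) fun p hp => ?_
          rw [hB, Finset.mem_filter, Finsupp.mem_support_iff, not_le] at hp
          exact hp.2.le.trans (le_self_pow₀ (by linarith [hp.2]) hp.1)
      _ ≤ ∏ p ∈ m.support, (N p : ℝ) ^ (m p) := by
          have : ∏ p ∈ B, (N p) ^ (m p) ≤ ∏ p ∈ m.support, (N p) ^ (m p) := 
            Finset.prod_le_prod_of_subset_of_one_le' (Finset.filter_subset _ _)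
              (fun p _ _ => Nat.one_le_pow _ _ (by have := hN p; omega))
          exact_mod_cast this
      _ = Nm N m := by
          unfold Nm Finsupp.prod
          push_cast
          rfl
  have h4 : B.card ≤ 4 := (pow_le_pow_iff_right₀ hy).1 h3
  have h5 : (B.card : ℝ) ≤ 4 := by exact_mod_cast h4
  rw [h1, h2, add_sub_cancel_left, abs_of_nonneg (by positivity)]
  exact h5

lemma bad_small (hN : ∀ p, 2 ≤ N p) {κ : ℝ} (hκ : 0 < κ)
    (hC : Tendsto (fun x => Cnt N x / x) atTop (𝓝 κ)) {ε : ℝ} (hε : 0 < ε) {δ : ℝ} (hδ : 0 < δ) :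
    ∀ᶠ y : ℝ in atTop, ({m : P →₀ ℕ | (Nm N m : ℝ) ≤ y ^ 4 ∧
            ((omegaM m : ℝ) < (1 - ε) * Real.log (Real.log (Nm N m)) ∨
              (1 + ε) * Real.log (Real.log (Nm N m)) < (omegaM m : ℝ))}.ncard : ℝ) ≤ δ * y ^ 4 := by
  have hfin := MS_finite hκ hC
  obtain ⟨C, hC0, hCb⟩ := Cnt_bound hN hκ hC
  set e : ℝ := min 1 (δ * ε ^ 2 / (κ * 256)) with he
  have he0 : 0 < e := by positivity
  have he1 : e ≤ 1 := min_le_left _ _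
  have he2 : e * (κ * 256) ≤ δ * ε ^ 2 := by
    rw [← le_div_iff₀ (by positivity)]
    exact min_le_right _ _
  have H0 : ∀ᶠ t in atTop, |Cnt N t - κ * t| ≤ e * (κ * t) := by
    have := hC.eventually (Metric.closedBall_mem_nhds κ (show 0 < e * κ by positivity))
    filter_upwards [this, eventually_gt_atTop 0] with t ht ht0
    rw [Real.dist_eq] at ht
    have h1 : Cnt N t - κ * t = (Cnt N t / t - κ) * t := by field_simp
    rw [h1, abs_mul, abs_of_pos ht0]
    nlinarith
  obtain ⟨X, hX⟩ := eventually_atTop.1 H0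
  set d : ℝ := min 1 (ε / 4) with hd
  have hd0 : 0 < d := by positivity
  have hd1 : d ≤ 1 := min_le_left _ _
  have hd2 : d ≤ ε / 4 := min_le_right _ _
  filter_upwards [mertens_hi hN hκ hC hd0, mertens_lo hN hκ hC hd0 hd1, eventually_gt_atTop 1,
    eventually_ge_atTop X, eventually_ge_atTop (2 * C / δ),
    tendsto_loglog.eventually (eventually_ge_atTop 1),
    tendsto_loglog.eventually (eventually_ge_atTop (24 / ε)),
    tendsto_loglog.eventually (eventually_ge_atTop (64 * κ / (ε ^ 2 * δ)))] 
    with y hhi hlo hy1 hyX hyC hl1 hl2 hl3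
  set l := Real.log (Real.log y) with hl
  set L := LP N y with hL
  rw [div_le_iff₀ (by positivity)] at hl2 hl3 hyC
  have hyy : y ≤ y ^ 2 := by nlinarith
  have hT := turan hN hfin hκ he0.le he1 hy1.le (fun t ht => hX t (by linarith))
  set A := (hfin (y ^ 4)).toFinset with hA
  have hlogy := Real.log_pos hy1
  set G := A.filter (fun m => ε / 2 * l ≤ |Wt (PF N y) m - L|) with hG
  have hsub : {m : P →₀ ℕ | (Nm N m : ℝ) ≤ y ^ 4 ∧
            ((omegaM m : ℝ) < (1 - ε) * Real.log (Real.log (Nm N m)) ∨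
              (1 + ε) * Real.log (Real.log (Nm N m)) < (omegaM m : ℝ))} ⊆ 
        MS N (y ^ 2) ∪ (G : Set (P →₀ ℕ)) := by
    rintro m ⟨hm, hbad⟩
    rcases le_total (Nm N m : ℝ) (y ^ 2) with hle | hge
    · exact Or.inl hle
    · right
      rw [Finset.mem_coe, hG, Finset.mem_filter, hA, Set.Finite.mem_toFinset]
      refine ⟨hm, ?_⟩
      have hdiff := omega_diff hN hfin hy1 hm
      have hpos : (0:ℝ) < Nm N m := by exact_mod_cast Nm_pos hN m
      have hv1 : 2 * Real.log y ≤ Real.log (Nm N m) := by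
        have := Real.log_le_log (by positivity) hge
        rwa [Real.log_pow] at this
      have hv2 : Real.log (Nm N m) ≤ 4 * Real.log y := by
        have := Real.log_le_log hpos hm
        rwa [Real.log_pow] at this
      have hlo' : l ≤ Real.log (Real.log (Nm N m)) := Real.log_le_log hlogy (by linarith)
      have hhi' : Real.log (Real.log (Nm N m)) ≤ l + 2 := by
        have h1 := Real.log_le_log (by linarith) hv2
        rw [Real.log_mul (by norm_num) hlogy.ne'] at h1
        have h2 : Real.log 4 ≤ 2 := by
          rw [show (4:ℝ) = 2 ^ 2 by norm_num, Real.log_pow]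
          have := Real.log_two_lt_d9
          norm_num at *
          linarith
        linarith
      set v := Real.log (Real.log (Nm N m)) with hv
      have hdl : d * l ≤ ε / 4 * l := by gcongr
      have hεv : ε * l ≤ ε * v := by gcongr
      have hd' := abs_le.1 hdiff
      rw [le_abs]
      rcases hbad with hb | hb
      · right
        linarith
      · left
        linarith
  have hcard : ({m : P →₀ ℕ | (Nm N m : ℝ) ≤ y ^ 4 ∧
            ((omegaM m : ℝ) < (1 - ε) * Real.log (Real.log (Nm N m)) ∨
              (1 + ε) * Real.log (Real.log (Nm N m)) < (omegaM m : ℝ))}.ncard : ℝ) ≤ 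
        Cnt N (y ^ 2) + G.card := by
    have h1 := Set.ncard_le_ncard hsub ((hfin _).union G.finite_toSet)
    have h2 := h1.trans (Set.ncard_union_le _ _)
    rw [Set.ncard_coe_finset] at h2
    unfold Cnt
    exact_mod_cast h2
  have hc1 : Cnt N (y ^ 2) ≤ δ / 2 * y ^ 4 := by
    refine (hCb _ (by positivity)).trans ?_
    have : C ≤ δ / 2 * y ^ 2 := by nlinarith
    nlinarith [sq_nonneg y]
  have hc2 : (G.card : ℝ) * (ε / 2 * l) ^ 2 ≤ κ * y ^ 4 * (4 * e * L ^ 2 + 2 * L) := by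
    refine le_trans ?_ hT
    calc (G.card : ℝ) * (ε / 2 * l) ^ 2 = ∑ m ∈ G, (ε / 2 * l) ^ 2 := by simp
      _ ≤ ∑ m ∈ G, (Wt (PF N y) m - L) ^ 2 := by
          refine Finset.sum_le_sum fun m hm => ?_
          rw [hG, Finset.mem_filter] at hm
          rw [← sq_abs (Wt (PF N y) m - L)]
          have : 0 ≤ ε / 2 * l := by positivity
          exact pow_le_pow_left₀ this hm.2 2
      _ ≤ _ := Finset.sum_le_sum_of_subset_of_nonneg (Finset.filter_subset _ _) 
          (fun _ _ _ => sq_nonneg _)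
  have hL0 : 0 ≤ L := by rw [hL]; unfold LP; positivity
  have hL2 : L ≤ 2 * l := by nlinarith
  have hc3 : κ * y ^ 4 * (4 * e * L ^ 2 + 2 * L) ≤ κ * y ^ 4 * (16 * e * l ^ 2 + 4 * l) := by
    have h1 : L ^ 2 ≤ (2 * l) ^ 2 := pow_le_pow_left₀ hL0 hL2 2
    have h2 : 4 * e * L ^ 2 ≤ 4 * e * (2 * l) ^ 2 := by gcongr
    have h3 : 4 * e * L ^ 2 + 2 * L ≤ 16 * e * l ^ 2 + 4 * l := by nlinarith
    gcongr
  have hc4 : κ * (16 * e * l ^ 2 + 4 * l) ≤ δ / 2 * (ε / 2 * l) ^ 2 := by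
    have h1 : e * (κ * 256) * l ^ 2 ≤ δ * ε ^ 2 * l ^ 2 := by gcongr
    have h2 : 64 * κ * l ≤ l * (ε ^ 2 * δ) * l := by gcongr
    nlinarith
  have hc5 : (G.card : ℝ) ≤ δ / 2 * y ^ 4 := by
    have hp : 0 < (ε / 2 * l) ^ 2 := by positivity
    refine le_of_mul_le_mul_right ?_ hp
    calc _ ≤ _ := hc2.trans hc3
      _ = y ^ 4 * (κ * (16 * e * l ^ 2 + 4 * l)) := by ring
      _ ≤ y ^ 4 * (δ / 2 * (ε / 2 * l) ^ 2) := by gcongr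
      _ = _ := by ring
  linarith

end Helpers4

/-- `ω` has normal order `log log N(m)` over the `h`-free elements. -/
theorem normal_order_omega_hfree {P : Type*} [Countable P] (N : P → ℕ)
    (hN : ∀ p, 2 ≤ N p) (κ θ : ℝ) (hstar : StarCond N κ θ)
    (h : ℕ) (hh : 2 ≤ h) (ε : ℝ) (hε : 0 < ε) :
    Tendsto (fun x : ℝ =>
        (({m : P →₀ ℕ | HFree h m ∧ (Nm N m : ℝ) ≤ x ∧
            ((omegaM m : ℝ) < (1 - ε) * Real.log (Real.log (Nm N m)) ∨
              (1 + ε) * Real.log (Real.log (Nm N m)) < (omegaM m : ℝ))}.ncard : ℝ)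
          / ({m : P →₀ ℕ | HFree h m ∧ (Nm N m : ℝ) ≤ x}.ncard : ℝ)))
      atTop (𝓝 0) := by
  obtain ⟨hκ, -⟩ := id hstar
  have hC := star_tendsto hstar
  have hfin := MS_finite hκ hC
  obtain ⟨c, hc, hlo⟩ := hfree_lo hN hκ hC hh
  rw [Metric.tendsto_nhds]
  intro η hη
  have hy : Tendsto (fun x : ℝ => x ^ (1 / 4 : ℝ)) atTop atTop := tendsto_rpow_atTop (by norm_num)
  have hb := hy.eventually (bad_small hN hκ hC hε (show 0 < η * c / 2 by positivity))
  filter_upwards [hlo, hb, eventually_gt_atTop 0] with x h1 h2 hx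
  have h3 : (x ^ (1 / 4 : ℝ)) ^ 4 = x := by
    rw [← Real.rpow_natCast, ← Real.rpow_mul hx.le]
    norm_num
  rw [h3] at h2
  rw [Real.dist_eq, sub_zero, abs_of_nonneg (by positivity), div_lt_iff₀ 
    (lt_of_lt_of_le (by positivity) h1)]
  have h4 : ({m : P →₀ ℕ | HFree h m ∧ (Nm N m : ℝ) ≤ x ∧
            ((omegaM m : ℝ) < (1 - ε) * Real.log (Real.log (Nm N m)) ∨
              (1 + ε) * Real.log (Real.log (Nm N m)) < (omegaM m : ℝ))}.ncard : ℝ) ≤ 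
      η * c / 2 * x := by
    refine le_trans ?_ h2
    have : {m : P →₀ ℕ | (Nm N m : ℝ) ≤ x ∧
            ((omegaM m : ℝ) < (1 - ε) * Real.log (Real.log (Nm N m)) ∨
              (1 + ε) * Real.log (Real.log (Nm N m)) < (omegaM m : ℝ))}.Finite := 
      (hfin x).subset (fun m hm => hm.1)
    refine Nat.cast_le.2 (Set.ncard_le_ncard ?_ this)
    intro m hm
    exact hm.2
  have h5 : η * (c * x) ≤ η * ({m : P →₀ ℕ | HFree h m ∧ (Nm N m : ℝ) ≤ x}.ncard : ℝ) := by
    gcongr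
  have : 0 < η * c * x := by positivity
  linarith
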